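/- Let n, k ≥ 1, let P be a 2n×2n complex matrix that is skew ♭-Hermitian (J_n⁻¹P†J_n = −P), and let D be a 2n×2k complex matrix with ♭-conjugate D♭ = J_k⁻¹D†J_n. For s ∈ ℂ such that sI − P is invertible, the matrix (−s̄)I − P is also invertible, and the function M(s) := D♭(sI−P)⁻¹D satisfies the symmetry M~(s) := J_k⁻¹M(−s̄)†J_k = −M(s). -/

import Mathlib

open Matrix Complex

/-- `Jmat k` is the `2k×2k` block-diagonal complex matrix with `k` copies of `diag(i, −i)`
on the diagonal. -/
noncomputable def Jmat (k : ℕ) : Matrix (Fin (2 * k)) (Fin (2 * k)) ℂ :=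
  Matrix.diagonal fun i => if i.val % 2 = 0 then Complex.I else -Complex.I

theorem Jmat_sq (k : ℕ) : Jmat k * Jmat k = -1 := by
  unfold Jmat
  rw [Matrix.diagonal_mul_diagonal, ← Matrix.diagonal_one, Matrix.diagonal_neg]
  congr 1
  funext i
  split_ifs <;> simp

theorem Jmat_inv (k : ℕ) : (Jmat k)⁻¹ = -Jmat k := by
  apply Matrix.inv_eq_right_inv
  rw [mul_neg, Jmat_sq, neg_neg]

theorem Jmat_star (k : ℕ) : (Jmat k)ᴴ = -Jmat k := by
  unfold Jmat
  rw [Matrix.diagonal_conjTranspose, Matrix.diagonal_neg]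
  congr 1
  funext i
  simp only [Pi.star_apply]
  split_ifs <;> simp

theorem Jmat_isUnit (k : ℕ) : IsUnit (Jmat k) := by
  refine IsUnit.of_mul_eq_one (-Jmat k) ?_
  rw [mul_neg, Jmat_sq, neg_neg]

/-- Symmetry of the system transfer matrix `M(s) = D♭(sI−P)⁻¹D`: if `P` is skew
♭-Hermitian and `sI − P` is invertible, then `(−s̄)I − P` is invertible and
`M~(s) := J_k⁻¹ M(−s̄)† J_k = −M(s)`, where `D♭ = J_k⁻¹ D† J_n`. -/
theorem M_sim_eq_neg_M (n k : ℕ) (hn : 1 ≤ n) (hk : 1 ≤ k)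
    (P : Matrix (Fin (2 * n)) (Fin (2 * n)) ℂ)
    (hP : (Jmat n)⁻¹ * Pᴴ * Jmat n = -P)
    (D : Matrix (Fin (2 * n)) (Fin (2 * k)) ℂ)
    (s : ℂ) (hs : IsUnit (s • (1 : Matrix (Fin (2 * n)) (Fin (2 * n)) ℂ) - P)) :
    IsUnit ((-(starRingEnd ℂ s)) • (1 : Matrix (Fin (2 * n)) (Fin (2 * n)) ℂ) - P) ∧
      (Jmat k)⁻¹ *
          (((Jmat k)⁻¹ * Dᴴ * Jmat n) *
              ((-(starRingEnd ℂ s)) • (1 : Matrix (Fin (2 * n)) (Fin (2 * n)) ℂ) - P)⁻¹ * D)ᴴ *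
          Jmat k =
        -(((Jmat k)⁻¹ * Dᴴ * Jmat n) *
            (s • (1 : Matrix (Fin (2 * n)) (Fin (2 * n)) ℂ) - P)⁻¹ * D) := by
  have hJ := Jmat_sq n
  have hPH : Pᴴ = Jmat n * P * Jmat n := by
    have h : P = Jmat n * Pᴴ * Jmat n := by
      rw [Jmat_inv, neg_mul, neg_mul] at hP
      exact (neg_injective hP).symm
    calc Pᴴ = (Jmat n * Jmat n) * Pᴴ * (Jmat n * Jmat n) := by simp [hJ]
      _ = Jmat n * (Jmat n * Pᴴ * Jmat n) * Jmat n := by simp only [Matrix.mul_assoc]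
      _ = _ := by rw [← h]
  have hB : ((-(starRingEnd ℂ s)) • (1 : Matrix (Fin (2 * n)) (Fin (2 * n)) ℂ) - P)ᴴ
      = Jmat n * (s • (1 : Matrix (Fin (2 * n)) (Fin (2 * n)) ℂ) - P) * Jmat n := by
    rw [Matrix.conjTranspose_sub, hPH, Matrix.mul_sub, Matrix.sub_mul]
    simp [hJ]
  generalize (-(starRingEnd ℂ s)) • (1 : Matrix (Fin (2 * n)) (Fin (2 * n)) ℂ) - P = B at *
  generalize s • (1 : Matrix (Fin (2 * n)) (Fin (2 * n)) ℂ) - P = A at *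
  constructor
  · have h : IsUnit Bᴴ := by
      rw [hB]
      exact ((Jmat_isUnit n).mul hs).mul (Jmat_isUnit n)
    exact isUnit_star.mp h
  · have hk2 := Jmat_sq k
    have hD : Jmat n * (Jmat n * D) = -D := by
      rw [← Matrix.mul_assoc, hJ, Matrix.neg_mul, Matrix.one_mul]
    simp only [Matrix.conjTranspose_mul, Matrix.conjTranspose_nonsing_inv, hB, Matrix.mul_inv_rev,
      Jmat_inv, Matrix.conjTranspose_neg, Jmat_star, Matrix.conjTranspose_conjTranspose,
      Matrix.mul_assoc, Matrix.neg_mul, Matrix.mul_neg, neg_neg, hk2, hD, Matrix.mul_one]
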